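/- Let F be a finite simple graph with at least one edge, let r ≥ 2 be an integer, and let d > 0 be a real number. Suppose Builder has a winning strategy in the deterministic F-avoidance game with r colors and density restriction d. Then for every function N : ℕ → ℕ with n^{2−1/d} = o(N(n)) and N(n) ≤ n(n−1)/2 for all n, and for every sequence of online Painter strategies with r colors (one strategy for each board size n), the probability that the board G_{N(n)} of the online F-avoidance game with r colors on n vertices contains a monochromatic copy of F tends to 1 as n → ∞. -/

import Mathlib

open SimpleGraph Filter Asymptotics
open scoped Classical

/-- A history of the game: the sequence of edges presented so far, together with
the colors (elements of `Fin r`, representing the colors `1,…,r`) they received. -/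
abbrev EdgeHistory (V : Type) (r : ℕ) := List (Sym2 V × Fin r)

/-- A Painter strategy on vertex type `V` with `r` colors: a function assigning a color
to every pair (history, new edge). -/
abbrev PainterStrategy (V : Type) (r : ℕ) := EdgeHistory V r → Sym2 V → Fin r

/-- Auxiliary function: run a Painter strategy on a list of presented edges,
extending the given history. -/
def runPainterAux {V : Type} {r : ℕ} (π : PainterStrategy V r) :
    EdgeHistory V r → List (Sym2 V) → EdgeHistory V r
  | h, [] => h
  | h, e :: es => runPainterAux π (h ++ [(e, π h e)]) es

/-- The colored history obtained by coloring the edges of `l` successively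
according to the Painter strategy `π`. -/
def runPainter {V : Type} {r : ℕ} (π : PainterStrategy V r) (l : List (Sym2 V)) :
    EdgeHistory V r :=
  runPainterAux π [] l

/-- `G` contains a copy of `F`, i.e. a subgraph isomorphic to `F`. -/
def IsCopy {α β : Type} (F : SimpleGraph α) (G : SimpleGraph β) : Prop :=
  ∃ f : α ↪ β, ∀ u v : α, F.Adj u v → G.Adj (f u) (f v)

/-- The graph formed by the edges of color `c` in the history `h`. -/
def colorGraph {V : Type} {r : ℕ} (h : EdgeHistory V r) (c : Fin r) : SimpleGraph V :=
  SimpleGraph.fromEdgeSet {e | (e, c) ∈ h}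

/-- The history `h` contains a monochromatic copy of `F`. -/
def HasMonoCopy {α V : Type} {r : ℕ} (F : SimpleGraph α) (h : EdgeHistory V r) : Prop :=
  ∃ c : Fin r, IsCopy F (colorGraph h c)

/-- The number of edges of `G` lying entirely within the vertex set `S`. -/
noncomputable def edgesWithin {V : Type} (G : SimpleGraph V) (S : Set V) : ℕ :=
  (G.edgeSet ∩ {e | ∀ v ∈ e, v ∈ S}).ncard

/-- `m(G) ≤ d`: every subgraph `H` of `G` with at least one vertex satisfies `e_H ≤ d · v_H`. -/
def DensityLE {V : Type} (G : SimpleGraph V) (d : ℝ) : Prop :=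
  ∀ S : Finset V, S.Nonempty → (edgesWithin G (↑S : Set V) : ℝ) ≤ d * (S.card : ℝ)

/-- `G` contains no cycle and every connected component of `G` has at most `k` edges
(equivalently, `G` is acyclic and contains no connected subgraph with more than `k` edges). -/
def TreeSizeLE {V : Type} (G : SimpleGraph V) (k : ℕ) : Prop :=
  G.IsAcyclic ∧ ∀ S : Set V, (G.induce S).Connected → edgesWithin G S ≤ k

/-- A legal sequence of moves for Builder: distinct non-loop edges. -/
def ValidEdgeSeq {V : Type} (l : List (Sym2 V)) : Prop :=
  l.Nodup ∧ ∀ e ∈ l, ¬ e.IsDiag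

/-- The (uncolored) board formed by a list of edges. -/
def boardOf {V : Type} (l : List (Sym2 V)) : SimpleGraph V :=
  SimpleGraph.fromEdgeSet {e | e ∈ l}

/-- Builder has a winning strategy in the deterministic `F`-avoidance game with `r` colors
and density restriction `d`. -/
def BuilderWinsDensity {α : Type} (F : SimpleGraph α) (r : ℕ) (d : ℝ) : Prop :=
  ∃ a : ℕ, ∀ π : PainterStrategy (Fin a) r, ∃ l : List (Sym2 (Fin a)),
    ValidEdgeSeq l ∧ (∀ i : ℕ, DensityLE (boardOf (l.take i)) d) ∧
    HasMonoCopy F (runPainter π l)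

/-- Builder has a winning strategy in the deterministic `F`-avoidance game with `r` colors
and tree size restriction `k`. -/
def BuilderWinsTree {α : Type} (F : SimpleGraph α) (r k : ℕ) : Prop :=
  ∃ a : ℕ, ∀ π : PainterStrategy (Fin a) r, ∃ l : List (Sym2 (Fin a)),
    ValidEdgeSeq l ∧ (∀ i : ℕ, TreeSizeLE (boardOf (l.take i)) k) ∧
    HasMonoCopy F (runPainter π l)

/-- The Painter strategy `π` on `a` vertices never creates a monochromatic copy of `F`
against any Builder play obeying the tree size restriction `k`. -/
def PainterAvoidsTree {α : Type} (F : SimpleGraph α) (r k a : ℕ)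
    (π : PainterStrategy (Fin a) r) : Prop :=
  ∀ l : List (Sym2 (Fin a)), ValidEdgeSeq l →
    (∀ i : ℕ, TreeSizeLE (boardOf (l.take i)) k) →
    ¬ HasMonoCopy F (runPainter π l)

/-- Painter has a winning strategy in the deterministic `F`-avoidance game with `r` colors
and tree size restriction `k`. -/
def PainterWinsTree {α : Type} (F : SimpleGraph α) (r k : ℕ) : Prop :=
  ∀ a : ℕ, ∃ π : PainterStrategy (Fin a) r, PainterAvoidsTree F r k a π

/-- A sequence of `N` distinct non-loop edges on `n` vertices. -/
def ValidSeqFun {n N : ℕ} (f : Fin N → Sym2 (Fin n)) : Prop :=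
  Function.Injective f ∧ ∀ i, ¬ (f i).IsDiag

/-- The probability (with respect to the uniformly random order in which the `N` distinct
edges of the random process on `n` vertices appear) of the event `P`. -/
noncomputable def onlineProb (n N : ℕ) (P : (Fin N → Sym2 (Fin n)) → Prop) : ℝ :=
  (Set.ncard {f : Fin N → Sym2 (Fin n) | ValidSeqFun f ∧ P f} : ℝ) /
  (Set.ncard {f : Fin N → Sym2 (Fin n) | ValidSeqFun f} : ℝ)

/-- Event: playing the online strategy `π` on the random edge sequence `f` produces
a monochromatic copy of `F`. -/
def OnlineMonoCopy {α : Type} (F : SimpleGraph α) {r n N : ℕ}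
    (π : PainterStrategy (Fin n) r) (f : Fin N → Sym2 (Fin n)) : Prop :=
  HasMonoCopy F (runPainter π (List.ofFn f))


set_option linter.unusedSectionVars false

open scoped BigOperators

section RandProc

variable {E : Type} [Fintype E]

noncomputable def stepD (g : List E) (e : E) : List E := if e ∈ g then g else g ++ [e]

noncomputable def avP (Good : List E → Prop) : ℕ → List E → ℝ
  | 0, g => if Good g then 1 else 0
  | t + 1, g => Finset.univ.expect (fun e => avP Good t (stepD g e))

noncomputable def cntP (Good : List E → Prop) (t : ℕ) (g : List E) : ℝ :=
  ∑ s : Fin t → E, if (g ++ List.ofFn s).Nodup ∧ Good (g ++ List.ofFn s) then 1 else 0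

lemma sum_cons_aux (t : ℕ) (G : (Fin (t + 1) → E) → ℝ) :
    ∑ s, G s = ∑ e : E, ∑ s : Fin t → E, G (Fin.cons e s) := by
  rw [← Fintype.sum_prod_type']
  exact (Fintype.sum_equiv (Fin.consEquiv (fun _ => E)) _ _ (fun x => rfl)).symm

lemma expect_cons_aux (t : ℕ) (G : (Fin (t + 1) → E) → ℝ) :
    Finset.univ.expect G
      = Finset.univ.expect (fun e : E => Finset.univ.expect (fun s : Fin t → E => G (Fin.cons e s))) := by
  simp only [Fintype.expect_eq_sum_div_card]
  rw [sum_cons_aux, ← Finset.sum_div, div_div]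
  congr 1
  simp [pow_succ]

lemma avP_eq (Good : List E → Prop) (t : ℕ) (g : List E) :
    avP Good t g = Finset.univ.expect
      (fun s : Fin t → E => if Good ((List.ofFn s).foldl stepD g) then (1 : ℝ) else 0) := by
  induction t generalizing g with
  | zero => simp [avP]
  | succ t ih =>
    rw [expect_cons_aux]
    simp only [avP, ih, List.ofFn_succ, Fin.cons_zero, Fin.cons_succ, List.foldl_cons]

lemma avP_nonneg (Good : List E → Prop) (t : ℕ) (g : List E) : 0 ≤ avP Good t g := by
  rw [avP_eq]
  exact Finset.expect_nonneg (fun s _ => by split_ifs <;> norm_num)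

lemma avP_succ_ge [Nonempty E] (Good : List E → Prop) (hG : ∀ g e, Good g → Good (g ++ [e]))
    (t : ℕ) (g : List E) : avP Good t g ≤ avP Good (t + 1) g := by
  induction t generalizing g with
  | zero =>
    by_cases h : Good g
    · have : ∀ e, Good (stepD g e) := by
        intro e; unfold stepD; split_ifs
        · exact h
        · exact hG g e h
      simp [avP, h, this]
    · have := avP_nonneg Good 1 g
      simpa [avP, h] using this
  | succ t ih =>
    rw [avP, avP]
    exact Finset.expect_le_expect (fun e _ => ih _)

lemma avP_mono [Nonempty E] (Good : List E → Prop) (hG : ∀ g e, Good g → Good (g ++ [e]))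
    {t t' : ℕ} (h : t ≤ t') (g : List E) : avP Good t g ≤ avP Good t' g :=
  monotone_nat_of_le_succ (f := fun t => avP Good t g) (fun t => avP_succ_ge Good hG t g) h

lemma cntP_succ (Good : List E → Prop) (t : ℕ) (g : List E) :
    cntP Good (t + 1) g = ∑ e, cntP Good t (g ++ [e]) := by
  unfold cntP
  rw [sum_cons_aux]
  simp [List.ofFn_succ]

lemma avP_le [Nonempty E] (Good : List E → Prop) (hG : ∀ g e, Good g → Good (g ++ [e]))
    (t : ℕ) (g : List E) (hg : g.Nodup) (hc : g.length + t ≤ Fintype.card E) :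
    avP Good t g * ((Fintype.card E - g.length).descFactorial t : ℝ) ≤ cntP Good t g := by
  induction t generalizing g with
  | zero => simp [avP, cntP, hg]
  | succ t ih =>
    have hcard : (Finset.univ.filter (fun e => e ∈ g)).card = g.length := by
      rw [← List.toFinset_card_of_nodup hg]; congr 1; ext; simp
    have hM : (0 : ℝ) < Fintype.card E := by exact_mod_cast Fintype.card_pos
    have h1 : (Fintype.card E : ℝ) * avP Good (t + 1) g =
        ∑ e ∈ Finset.univ.filter (fun e => e ∈ g), avP Good t g
        + ∑ e ∈ Finset.univ.filter (fun e => ¬ e ∈ g), avP Good t (g ++ [e]) := by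
      rw [avP, Fintype.expect_eq_sum_div_card, mul_div_cancel₀ _ hM.ne',
        ← Finset.sum_filter_add_sum_filter_not _ (fun e => e ∈ g)]
      congr 1
      · apply Finset.sum_congr rfl
        intro e he
        simp only [Finset.mem_filter] at he
        simp [stepD, he.2]
      · apply Finset.sum_congr rfl
        intro e he
        simp only [Finset.mem_filter] at he
        simp [stepD, he.2]
    rw [Finset.sum_const, hcard, nsmul_eq_mul] at h1
    have h2 := avP_succ_ge Good hG t g
    have h3 : ((Fintype.card E : ℝ) - g.length) * avP Good (t + 1) g ≤
        ∑ e ∈ Finset.univ.filter (fun e => ¬ e ∈ g), avP Good t (g ++ [e]) := by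
      have : (0:ℝ) ≤ g.length := by positivity
      nlinarith
    obtain ⟨D, hD⟩ : ∃ D, Fintype.card E - g.length = D + 1 :=
      ⟨Fintype.card E - g.length - 1, by omega⟩
    rw [hD, Nat.succ_descFactorial_succ]
    have h4 : ((Fintype.card E : ℝ) - g.length) = (D + 1 : ℕ) := by
      rw [← hD, Nat.cast_sub (by omega)]
    rw [cntP_succ]
    calc avP Good (t + 1) g * (((D + 1) * D.descFactorial t : ℕ) : ℝ)
        = ((Fintype.card E : ℝ) - g.length) * avP Good (t + 1) g * (D.descFactorial t) := by
          rw [h4]; push_cast; ring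
      _ ≤ (∑ e ∈ Finset.univ.filter (fun e => ¬ e ∈ g), avP Good t (g ++ [e])) *
            (D.descFactorial t) := by gcongr
      _ ≤ ∑ e ∈ Finset.univ.filter (fun e => ¬ e ∈ g), cntP Good t (g ++ [e]) := by
          rw [Finset.sum_mul]
          apply Finset.sum_le_sum
          intro e he
          simp only [Finset.mem_filter] at he
          have := ih (g ++ [e]) (by
            rw [List.nodup_append]; simp [hg]; intro a ha hh; exact he.2 (hh ▸ ha))
            (by simp; omega)
          have h5 : Fintype.card E - (g ++ [e]).length = D := by simp; omega
          rwa [h5] at this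
      _ ≤ _ := by
          apply Finset.sum_le_sum_of_subset_of_nonneg (Finset.filter_subset _ _)
          intro e _ _
          exact Finset.sum_nonneg (fun s _ => by split_ifs <;> norm_num)

lemma mem_foldl_stepD (l g : List E) (x : E) :
    x ∈ l.foldl stepD g ↔ x ∈ g ∨ x ∈ l := by
  induction l generalizing g with
  | nil => simp
  | cons e l ih =>
    rw [List.foldl_cons, ih]
    unfold stepD
    split_ifs with h
    · simp only [List.mem_cons]
      constructor
      · tauto
      · rintro (h1 | rfl | h1) <;> tauto
    · simp only [List.mem_append, List.mem_cons, List.not_mem_nil, or_false]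
      tauto

lemma prefix_foldl_stepD (l g : List E) : g <+: l.foldl stepD g := by
  induction l generalizing g with
  | nil => simp
  | cons e l ih =>
    rw [List.foldl_cons]
    refine List.IsPrefix.trans ?_ (ih _)
    unfold stepD
    split_ifs <;> simp

end RandProc

section Run

lemma runPainterAux_append {V : Type} {r : ℕ} (π : PainterStrategy V r) (h : EdgeHistory V r)
    (l l' : List (Sym2 V)) :
    runPainterAux π h (l ++ l') = runPainterAux π (runPainterAux π h l) l' := by
  induction l generalizing h with
  | nil => rfl
  | cons e l ih => simp [runPainterAux, ih]

lemma runPainter_concat {V : Type} {r : ℕ} (π : PainterStrategy V r)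
    (l : List (Sym2 V)) (e : Sym2 V) :
    runPainter π (l ++ [e]) = runPainter π l ++ [(e, π (runPainter π l) e)] := by
  simp [runPainter, runPainterAux_append, runPainterAux]

lemma runPainterAux_prefix {V : Type} {r : ℕ} (π : PainterStrategy V r) (h : EdgeHistory V r)
    (l : List (Sym2 V)) : h <+: runPainterAux π h l := by
  induction l generalizing h with
  | nil => simp [runPainterAux]
  | cons e l ih => exact List.IsPrefix.trans (by simp) (ih _)

lemma runPainter_prefix {V : Type} {r : ℕ} (π : PainterStrategy V r)
    {l l' : List (Sym2 V)} (h : l <+: l') : runPainter π l <+: runPainter π l' := by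
  obtain ⟨t, rfl⟩ := h
  unfold runPainter
  rw [runPainterAux_append]
  exact runPainterAux_prefix _ _ _

lemma runPainter_map_fst {V : Type} {r : ℕ} (π : PainterStrategy V r)
    (l : List (Sym2 V)) : (runPainter π l).map Prod.fst = l := by
  induction l using List.reverseRecOn with
  | nil => rfl
  | append_singleton l e ih => rw [runPainter_concat]; simp [ih]

lemma runPainter_length {V : Type} {r : ℕ} (π : PainterStrategy V r)
    (l : List (Sym2 V)) : (runPainter π l).length = l.length := by
  conv_rhs => rw [← runPainter_map_fst π l]
  simp

lemma exists_color {V : Type} {r : ℕ} (π : PainterStrategy V r)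
    (l : List (Sym2 V)) (e : Sym2 V) (he : e ∈ l) : ∃ c, (e, c) ∈ runPainter π l := by
  rw [← runPainter_map_fst π l] at he
  simpa using he

lemma HasMonoCopy.mono {α V : Type} {r : ℕ} {F : SimpleGraph α} {h h' : EdgeHistory V r}
    (hh : h <+: h') (H : HasMonoCopy F h) : HasMonoCopy F h' := by
  obtain ⟨c, f, hf⟩ := H
  refine ⟨c, f, fun u v huv => ?_⟩
  have := hf u v huv
  simp only [colorGraph, fromEdgeSet_adj, Set.mem_ofPred_eq] at this ⊢
  exact ⟨hh.subset this.1, this.2⟩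

end Run

/-- non-diagonal edges -/
abbrev EdgeT (n : ℕ) := {e : Sym2 (Fin n) // ¬ e.IsDiag}

lemma card_EdgeT (n : ℕ) : Fintype.card (EdgeT n) = n.choose 2 := by
  have := Sym2.card_subtype_not_diag (α := Fin n)
  rw [Fintype.card_fin] at this
  rw [← this]

def GoodL {α : Type} (F : SimpleGraph α) {r n : ℕ} (π : PainterStrategy (Fin n) r)
    (g : List (EdgeT n)) : Prop := HasMonoCopy F (runPainter π (g.map Subtype.val))

lemma GoodL_mono {α : Type} (F : SimpleGraph α) {r n : ℕ} (π : PainterStrategy (Fin n) r)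
    (g : List (EdgeT n)) (e) (h : GoodL F π g) : GoodL F π (g ++ [e]) := by
  unfold GoodL at *
  exact h.mono (runPainter_prefix π (by simp))

lemma ncard_valid (n N : ℕ) (P : (Fin N → Sym2 (Fin n)) → Prop) :
    (Set.ncard {f : Fin N → Sym2 (Fin n) | ValidSeqFun f ∧ P f} : ℝ) =
      ∑ s : Fin N → EdgeT n, if Function.Injective s ∧ P (fun i => (s i).1) then 1 else 0 := by
  rw [Finset.sum_boole]
  norm_cast
  rw [← Set.ncard_coe_finset]
  symm
  apply Set.ncard_congr (fun s _ => fun i => (s i).1)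
  · intro s hs
    simp only [Finset.coe_filter, Finset.mem_univ, true_and, Set.mem_ofPred_eq] at hs ⊢
    exact ⟨⟨fun i j hij => hs.1 (Subtype.ext hij), fun i => (s i).2⟩, hs.2⟩
  · intro s t _ _ h
    ext i : 1
    exact Subtype.ext (congrFun h i)
  · intro f hf
    refine ⟨fun i => ⟨f i, hf.1.2 i⟩, ?_, rfl⟩
    simp only [Finset.coe_filter, Finset.mem_univ, true_and, Set.mem_ofPred_eq]
    exact ⟨fun i j hij => hf.1.1 (congrArg Subtype.val hij), hf.2⟩

lemma onlineProb_ge {α : Type} (F : SimpleGraph α) {r n : ℕ} (π : PainterStrategy (Fin n) r)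
    (N t : ℕ) (hN : N ≤ n.choose 2) (ht : t ≤ N) (hn : 2 ≤ n) :
    avP (GoodL F π) t [] ≤ onlineProb n N (OnlineMonoCopy F π) := by
  have : Nonempty (EdgeT n) := by
    rw [← Fintype.card_pos_iff, card_EdgeT]
    exact Nat.choose_pos hn
  have h1 := avP_mono (GoodL F π) (GoodL_mono F π) ht []
  have h2 := avP_le (GoodL F π) (GoodL_mono F π) N [] List.nodup_nil
    (by rw [card_EdgeT]; simpa using hN)
  have hden : (Set.ncard {f : Fin N → Sym2 (Fin n) | ValidSeqFun f} : ℝ) =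
      ((n.choose 2).descFactorial N : ℝ) := by
    have := ncard_valid n N (fun _ => True)
    simp only [and_true] at this
    rw [this, Finset.sum_boole, ← Fintype.card_subtype,
      Fintype.card_congr (Equiv.subtypeInjectiveEquivEmbedding _ _), Fintype.card_embedding_eq,
      card_EdgeT, Fintype.card_fin]
  have hpos : (0 : ℝ) < ((n.choose 2).descFactorial N : ℝ) := by
    exact_mod_cast Nat.descFactorial_pos.2 hN
  refine h1.trans ?_
  unfold onlineProb
  rw [hden, le_div_iff₀ hpos]
  rw [card_EdgeT] at h2
  refine h2.trans (le_of_eq ?_)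
  rw [ncard_valid]
  unfold cntP
  apply Finset.sum_congr rfl
  intro s _
  simp only [List.nil_append, List.nodup_ofFn, GoodL, OnlineMonoCopy, List.map_ofFn]
  rfl

lemma onlineProb_le_one (n N : ℕ) (P : (Fin N → Sym2 (Fin n)) → Prop) :
    onlineProb n N P ≤ 1 := by
  unfold onlineProb
  apply div_le_one_of_le₀ _ (by positivity)
  have : {f : Fin N → Sym2 (Fin n) | ValidSeqFun f ∧ P f} ⊆ {f | ValidSeqFun f} :=
    fun f hf => hf.1
  exact_mod_cast Set.ncard_le_ncard this (Set.toFinite _)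

section SecondMoment

variable {E : Type} [Fintype E]

noncomputable def cntY {m : ℕ} (y : Fin m → E) (x : E) : ℝ := ∑ i, if y i = x then 1 else 0

lemma cntY_nonneg {m : ℕ} (y : Fin m → E) (x : E) : 0 ≤ cntY y x :=
  Finset.sum_nonneg (fun s _ => by split_ifs <;> norm_num)

lemma cntY_cons {m : ℕ} (e : E) (y : Fin m → E) (x : E) :
    cntY (Fin.cons e y : Fin (m + 1) → E) x = (if e = x then 1 else 0) + cntY y x := by
  unfold cntY
  rw [Fin.sum_univ_succ]
  simp only [Fin.cons_zero, Fin.cons_succ]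

lemma expect_ind [Nonempty E] (x : E) :
    Finset.univ.expect (fun e : E => if e = x then (1 : ℝ) else 0) = 1 / Fintype.card E := by
  rw [Fintype.expect_eq_sum_div_card]; simp

lemma expect_cntY [Nonempty E] (m : ℕ) (x : E) :
    Finset.univ.expect (fun y : Fin m → E => cntY y x) = m / Fintype.card E := by
  induction m with
  | zero => simp [cntY]
  | succ m ih =>
    rw [expect_cons_aux]
    simp only [cntY_cons, Finset.expect_add_distrib, ih, Fintype.expect_const, expect_ind]
    push_cast; ring

lemma expect_cntY_mul [Nonempty E] (m : ℕ) (x x' : E) :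
    Finset.univ.expect (fun y : Fin m → E => cntY y x * cntY y x') =
      (m : ℝ) * (m - 1) / (Fintype.card E : ℝ) ^ 2
      + (m / Fintype.card E) * (if x = x' then 1 else 0) := by
  have hM : (Fintype.card E : ℝ) ≠ 0 := by exact_mod_cast Fintype.card_ne_zero
  induction m with
  | zero => simp [cntY]
  | succ m ih =>
    rw [expect_cons_aux]
    have h0 : Finset.univ.expect (fun e : E => (if e = x then (1:ℝ) else 0) * (if e = x' then (1:ℝ) else 0))
        = (1 / Fintype.card E) * (if x = x' then 1 else 0) := by
      rw [Fintype.expect_eq_sum_div_card]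
      by_cases h : x = x'
      · subst h; simp
      · simp [h, Ne.symm h]
    simp only [cntY_cons, add_mul, mul_add, Finset.expect_add_distrib, ih, Fintype.expect_const,
      ← Finset.expect_mul, ← Finset.mul_expect, expect_ind, expect_cntY, h0]
    push_cast
    field_simp
    ring

lemma expect_cntY_mul_le [Nonempty E] (m : ℕ) (x x' : E) :
    Finset.univ.expect (fun y : Fin m → E => cntY y x * cntY y x') ≤
      ((m : ℝ) / Fintype.card E) ^ 2
      + (m / Fintype.card E) * (if x = x' then 1 else 0) := by
  rw [expect_cntY_mul]
  gcongr
  rw [div_pow]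
  gcongr
  have : (0 : ℝ) ≤ m := by positivity
  nlinarith

lemma expect_var_le [Nonempty E] {Φ : Type} [Fintype Φ] (m : ℕ) (x : Φ → E) (w : Φ → ℝ)
    (hw : ∀ φ, 0 ≤ w φ) :
    Finset.univ.expect (fun y : Fin m → E =>
      (∑ φ, w φ * (cntY y (x φ) - m / Fintype.card E)) ^ 2) ≤
    ∑ φ, ∑ ψ, w φ * w ψ * ((m / Fintype.card E) * (if x φ = x ψ then 1 else 0)) := by
  simp only [sq, Finset.sum_mul_sum]
  rw [Finset.expect_sum_comm]
  apply Finset.sum_le_sum; intro φ _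
  rw [Finset.expect_sum_comm]
  apply Finset.sum_le_sum; intro ψ _
  have h1 : ∀ y : Fin m → E, w φ * (cntY y (x φ) - m / Fintype.card E) *
      (w ψ * (cntY y (x ψ) - m / Fintype.card E)) =
      (w φ * w ψ) * (cntY y (x φ) * cntY y (x ψ) - (m / Fintype.card E) * cntY y (x φ)
        - (m / Fintype.card E) * cntY y (x ψ) + (m / Fintype.card E : ℝ) ^ 2) := by
    intro y; ring
  simp only [h1]
  rw [← Finset.mul_expect]
  apply mul_le_mul_of_nonneg_left _ (mul_nonneg (hw _) (hw _))
  simp only [Finset.expect_add_distrib, Finset.expect_sub_distrib, ← Finset.mul_expect,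
    expect_cntY, Fintype.expect_const]
  have := expect_cntY_mul_le m (x φ) (x ψ)
  linarith

lemma expect_update {B : Type} [Fintype B] [Nonempty B] {K : ℕ} (k : Fin K)
    (G : (Fin K → B) → ℝ) :
    Finset.univ.expect G = Finset.univ.expect (fun f : Fin K → B =>
      Finset.univ.expect (fun y : B => G (Function.update f k y))) := by
  have key : ∑ p : (Fin K → B) × B, G (Function.update p.1 k p.2) =
      ∑ p : (Fin K → B) × B, G p.1 := by
    refine Fintype.sum_equiv
      (⟨fun p => (Function.update p.1 k p.2, p.1 k), fun p => (Function.update p.1 k p.2, p.1 k),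
        fun p => by simp, fun p => by simp⟩ : ((Fin K → B) × B) ≃ ((Fin K → B) × B)) _ _ ?_
    intro p; rfl
  rw [Fintype.sum_prod_type, Fintype.sum_prod_type] at key
  simp only [Fintype.expect_eq_sum_div_card]
  rw [← Finset.sum_div, key]
  have hB : (Fintype.card B : ℝ) ≠ 0 := by exact_mod_cast Fintype.card_ne_zero
  simp only [Finset.sum_const, Finset.card_univ, nsmul_eq_mul, ← Finset.mul_sum]
  rw [mul_div_cancel_left₀ _ hB]

lemma expect_prod {B : Type} [Fintype B] {K : ℕ} (g : Fin K → B → ℝ) :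
    Finset.univ.expect (fun f : Fin K → B => ∏ j, g j (f j)) =
      ∏ j, Finset.univ.expect (g j) := by
  simp only [Fintype.expect_eq_sum_div_card]
  rw [Finset.prod_div_distrib, Finset.prod_univ_sum, Fintype.piFinset_univ]
  simp

lemma second_moment [Nonempty E] {Φ : Type} [Fintype Φ] {K m : ℕ} (k : Fin K)
    (x : Fin K → Φ → E) (w : (Fin K → Fin m → E) → Φ → ℝ)
    (hw0 : ∀ f φ, 0 ≤ w f φ)
    (hw1 : ∀ f φ, w f φ ≤ ∏ j, if j < k then cntY (f j) (x j φ) else 1)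
    (hwu : ∀ f φ y, w (Function.update f k y) φ = w f φ)
    (p : ℝ) (hp : p = m / Fintype.card E) :
    Finset.univ.expect (fun f : Fin K → Fin m → E =>
      (∑ φ, w f φ * cntY (f k) (x k φ) - p * ∑ φ, w f φ) ^ 2) ≤
    ∑ φ, ∑ ψ, (∏ j, if j < k then p ^ 2 + p * (if x j φ = x j ψ then 1 else 0) else 1) *
      (p * (if x k φ = x k ψ then 1 else 0)) := by
  have hp0 : 0 ≤ p := by rw [hp]; positivity
  have e1 : ∀ f : Fin K → Fin m → E, (∑ φ, w f φ * cntY (f k) (x k φ) - p * ∑ φ, w f φ)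
      = ∑ φ, w f φ * (cntY (f k) (x k φ) - p) := by
    intro f
    rw [Finset.mul_sum, ← Finset.sum_sub_distrib]
    exact Finset.sum_congr rfl (fun _ _ => by ring)
  simp only [e1]
  rw [expect_update k]
  simp only [hwu, Function.update_self]
  calc _ ≤ Finset.univ.expect (fun f : Fin K → Fin m → E =>
        ∑ φ, ∑ ψ, w f φ * w f ψ * (p * (if x k φ = x k ψ then 1 else 0))) := by
        apply Finset.expect_le_expect
        intro f _
        have := expect_var_le m (x k) (w f) (hw0 f)
        rw [← hp] at this
        exact this
    _ ≤ _ := by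
        rw [Finset.expect_sum_comm]
        apply Finset.sum_le_sum; intro φ _
        rw [Finset.expect_sum_comm]
        apply Finset.sum_le_sum; intro ψ _
        rw [← Finset.expect_mul]
        apply mul_le_mul_of_nonneg_right _ (by positivity)
        calc _ ≤ Finset.univ.expect (fun f : Fin K → Fin m → E =>
              ∏ j, if j < k then cntY (f j) (x j φ) * cntY (f j) (x j ψ) else 1) := by
              apply Finset.expect_le_expect
              intro f _
              calc _ ≤ (∏ j, if j < k then cntY (f j) (x j φ) else 1) *
                    (∏ j, if j < k then cntY (f j) (x j ψ) else 1) :=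
                    mul_le_mul (hw1 _ _) (hw1 _ _) (hw0 _ _) ((hw0 _ _).trans (hw1 _ _))
                _ = _ := by
                    rw [← Finset.prod_mul_distrib]
                    apply Finset.prod_congr rfl
                    intro j _
                    split_ifs <;> simp
          _ = ∏ j, Finset.univ.expect (fun y : Fin m → E =>
                if j < k then cntY y (x j φ) * cntY y (x j ψ) else 1) :=
              expect_prod (fun j y => if j < k then cntY y (x j φ) * cntY y (x j ψ) else 1)
          _ ≤ _ := by
              apply Finset.prod_le_prod
              · intro j _
                apply Finset.expect_nonneg
                intro y _
                split_ifs
                · exact mul_nonneg (cntY_nonneg _ _) (cntY_nonneg _ _)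
                · norm_num
              · intro j _
                by_cases hj : j < k
                · simp only [hj, if_true]
                  rw [hp]
                  exact expect_cntY_mul_le m _ _
                · simp [hj]

end SecondMoment

section Counting

lemma count_pairs {a n : ℕ} (W : Finset (Fin a)) (R : (Fin a ↪ Fin n) → (Fin a ↪ Fin n) → Prop)
    (hR : ∀ φ ψ, R φ ψ → ∀ u ∈ W, ∃ u', ψ u = φ u') :
    (∑ φ : Fin a ↪ Fin n, ∑ ψ : Fin a ↪ Fin n, if R φ ψ then (1 : ℝ) else 0) * (n : ℝ) ^ W.card
      ≤ (a : ℝ) ^ a * ((n : ℝ) ^ a) ^ 2 := by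
  have h1 : ∀ φ : Fin a ↪ Fin n,
      (∑ ψ : Fin a ↪ Fin n, if R φ ψ then (1 : ℝ) else 0) * (n : ℝ) ^ W.card ≤
        (a : ℝ) ^ a * (n : ℝ) ^ a := by
    intro φ
    rw [Finset.sum_boole]
    have h2 : (Finset.univ.filter (fun ψ : Fin a ↪ Fin n => R φ ψ)).card ≤
        (Fintype.piFinset (fun u : Fin a => if u ∈ W then Finset.univ.image φ
          else (Finset.univ : Finset (Fin n)))).card := by
      refine Finset.card_le_card_of_injOn (fun ψ : Fin a ↪ Fin n => (fun u => ψ u)) ?_ ?_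
      · intro ψ hψ
        simp only [Finset.coe_filter, Finset.mem_univ, true_and, Set.mem_setOf_eq] at hψ
        simp only [Finset.mem_coe, Fintype.mem_piFinset]
        intro u
        split_ifs with hu
        · obtain ⟨u', h⟩ := hR φ ψ hψ u hu
          simp [h]
        · simp
      · intro ψ _ ψ' _ h
        exact DFunLike.coe_injective h
    rw [Fintype.card_piFinset] at h2
    have h3 : ∏ u : Fin a, (if u ∈ W then Finset.univ.image φ
          else (Finset.univ : Finset (Fin n))).card = ∏ u : Fin a, if u ∈ W then a else n := by
      apply Finset.prod_congr rfl
      intro u _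
      split_ifs
      · rw [Finset.card_image_of_injective _ φ.injective]; simp
      · simp
    rw [h3, Finset.prod_ite, Finset.prod_const, Finset.prod_const] at h2
    have h4 : (Finset.univ.filter (fun u => u ∈ W)).card = W.card := by congr 1; ext; simp
    have h5 : (Finset.univ.filter (fun u => ¬ u ∈ W)).card + W.card = a := by
      rw [← h4, add_comm, Finset.card_filter_add_card_filter_not]; simp
    rw [h4] at h2
    have ha : a ^ W.card ≤ a ^ a := by
      rcases Nat.eq_zero_or_pos a with h0 | h0
      · have : W.card = a := by omega
        rw [this]
      · exact Nat.pow_le_pow_right h0 (by omega)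
    calc _ ≤ ((a ^ W.card * n ^ (Finset.univ.filter (fun u => ¬ u ∈ W)).card : ℕ) : ℝ)
            * (n : ℝ) ^ W.card := by gcongr
      _ = (a : ℝ) ^ W.card * (n : ℝ) ^ a := by
          push_cast; rw [mul_assoc, ← pow_add, h5]
      _ ≤ _ := by
          have ha' : (a : ℝ) ^ W.card ≤ (a : ℝ) ^ a := by exact_mod_cast ha
          exact mul_le_mul_of_nonneg_right ha' (by positivity)
  rw [Finset.sum_mul]
  calc _ ≤ ∑ φ : Fin a ↪ Fin n, (a : ℝ) ^ a * (n : ℝ) ^ a := Finset.sum_le_sum (fun φ _ => h1 φ)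
    _ = (Fintype.card (Fin a ↪ Fin n) : ℝ) * ((a : ℝ) ^ a * (n : ℝ) ^ a) := by simp
    _ ≤ (n : ℝ) ^ a * ((a : ℝ) ^ a * (n : ℝ) ^ a) := by
        gcongr
        rw [Fintype.card_embedding_eq]
        have := Nat.descFactorial_le_pow n a
        simp only [Fintype.card_fin]
        exact_mod_cast this
    _ = _ := by ring

end Counting

lemma lam_le {n : ℕ} {p d : ℝ} (hp : 0 < p) (hp1 : p ≤ 1) (hΛ : 1 ≤ n * p ^ d)
    (v t : ℕ) (hv : 0 < v) (h : (t : ℝ) ≤ d * v) :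
    n * p ^ d ≤ (n : ℝ) ^ v * p ^ t := by
  calc (n : ℝ) * p ^ d ≤ (n * p ^ d) ^ v := le_self_pow₀ hΛ hv.ne'
    _ = (n : ℝ) ^ v * p ^ (d * v) := by
        rw [mul_pow, Real.rpow_mul hp.le, Real.rpow_natCast]
    _ ≤ (n : ℝ) ^ v * p ^ (t : ℝ) := by
        apply mul_le_mul_of_nonneg_left _ (by positivity)
        exact Real.rpow_le_rpow_of_exponent_ge hp hp1 h
    _ = _ := by rw [Real.rpow_natCast]

noncomputable def vset {a K : ℕ} (e : Fin K → Sym2 (Fin a)) (T : Finset (Fin K)) : Finset (Fin a) :=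
  Finset.univ.filter (fun u => ∃ j ∈ T, u ∈ e j)

lemma moment_bound {E : Type} {a n K : ℕ} (k : Fin K) (e : Fin K → Sym2 (Fin a))
    (x : Fin K → (Fin a ↪ Fin n) → E) {p d : ℝ} (hp : 0 < p) (hp1 : p ≤ 1)
    (hΛ : 1 ≤ n * p ^ d)
    (hx : ∀ j ≤ k, ∀ φ ψ, x j φ = x j ψ → ∀ u ∈ e j, ∃ u', ψ u = φ u')
    (hd : ∀ T : Finset (Fin K), T.Nonempty → (∀ j ∈ T, j ≤ k) →
      (vset e T).Nonempty ∧ (T.card : ℝ) ≤ d * (vset e T).card) :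
    (n * p ^ d) * ∑ φ, ∑ ψ,
      (∏ j, if j < k then p ^ 2 + p * (if x j φ = x j ψ then 1 else 0) else 1) *
      (p * (if x k φ = x k ψ then 1 else 0)) ≤
    2 ^ K * (a : ℝ) ^ a * ((n : ℝ) ^ a * p ^ (k.val + 1)) ^ 2 := by
  set Q : Finset (Fin K) := Finset.univ.filter (fun j => j < k) with hQ
  have hQc : Q.card = k.val := by
    have h : Q = Finset.Iio k := by ext j; simp [hQ]
    rw [h]; simp
  have hexp : ∀ φ ψ : Fin a ↪ Fin n,
      (∏ j, if j < k then p ^ 2 + p * (if x j φ = x j ψ then 1 else 0) else 1) *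
      (p * (if x k φ = x k ψ then 1 else 0)) =
      ∑ T ∈ Q.powerset, p ^ (T.card + 2 * (k.val - T.card) + 1) *
        (if ∀ j ∈ insert k T, x j φ = x j ψ then (1 : ℝ) else 0) := by
    intro φ ψ
    rw [← Finset.prod_filter, ← hQ]
    simp only [add_comm (p ^ 2)]
    rw [Finset.prod_add, Finset.sum_mul]
    apply Finset.sum_congr rfl
    intro T hT
    have hT' := Finset.mem_powerset.1 hT
    rw [Finset.prod_mul_distrib, Finset.prod_const, Finset.prod_const, Finset.prod_boole,
      Finset.card_sdiff_of_subset hT', hQc]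
    simp only [Finset.forall_mem_insert]
    rw [pow_add, pow_add, pow_mul, pow_one]
    by_cases h1 : x k φ = x k ψ
    · by_cases h2 : ∀ j ∈ T, x j φ = x j ψ
      · rw [if_pos h1, if_pos h2, if_pos ⟨h1, h2⟩]; ring
      · rw [if_neg h2]
        rw [if_neg (show ¬ (x k φ = x k ψ ∧ ∀ j ∈ T, x j φ = x j ψ) from fun h => h2 h.2)]; ring
    · rw [if_neg h1]
      rw [if_neg (show ¬ (x k φ = x k ψ ∧ ∀ j ∈ T, x j φ = x j ψ) from fun h => h1 h.1)]; ring
  have hsw : ∑ φ, ∑ ψ,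
      (∏ j, if j < k then p ^ 2 + p * (if x j φ = x j ψ then 1 else 0) else 1) *
      (p * (if x k φ = x k ψ then 1 else 0)) =
      ∑ T ∈ Q.powerset, p ^ (T.card + 2 * (k.val - T.card) + 1) *
        ∑ φ : Fin a ↪ Fin n, ∑ ψ : Fin a ↪ Fin n,
          (if ∀ j ∈ insert k T, x j φ = x j ψ then (1 : ℝ) else 0) := by
    simp only [hexp, Finset.mul_sum]
    rw [Finset.sum_comm (s := Q.powerset)]
    exact Finset.sum_congr rfl (fun φ _ => Finset.sum_comm)
  rw [hsw, Finset.mul_sum]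
  have hterm : ∀ T ∈ Q.powerset, (n * p ^ d) * (p ^ (T.card + 2 * (k.val - T.card) + 1) *
        ∑ φ : Fin a ↪ Fin n, ∑ ψ : Fin a ↪ Fin n,
          (if ∀ j ∈ insert k T, x j φ = x j ψ then (1 : ℝ) else 0)) ≤
      (a : ℝ) ^ a * ((n : ℝ) ^ a * p ^ (k.val + 1)) ^ 2 := by
    intro T hT
    have hT' := Finset.mem_powerset.1 hT
    have hkT : k ∉ T := fun h => by
      have := hT' h
      simp [hQ] at this
    have hTc : T.card ≤ k.val := hQc ▸ Finset.card_le_card hT'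
    have hle : ∀ j ∈ insert k T, j ≤ k := by
      intro j hj
      rcases Finset.mem_insert.1 hj with rfl | hj
      · exact le_rfl
      · have := hT' hj
        simp [hQ] at this
        exact this.le
    obtain ⟨hne, hden⟩ := hd (insert k T) (Finset.insert_nonempty _ _) hle
    rw [Finset.card_insert_of_notMem hkT] at hden
    have hl := lam_le hp hp1 hΛ (vset e (insert k T)).card (T.card + 1) hne.card_pos hden
    have hc := count_pairs (n := n) (vset e (insert k T))
      (fun φ ψ => ∀ j ∈ insert k T, x j φ = x j ψ) (by
        intro φ ψ h u hu
        simp only [vset, Finset.mem_filter, Finset.mem_univ, true_and] at hu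
        obtain ⟨j, hj, hu⟩ := hu
        exact hx j (hle j hj) φ ψ (h j hj) u hu)
    generalize hS : ∑ φ : Fin a ↪ Fin n, ∑ ψ : Fin a ↪ Fin n,
          (if ∀ j ∈ insert k T, x j φ = x j ψ then (1 : ℝ) else 0) = S
    have hc' : S * (n : ℝ) ^ (vset e (insert k T)).card ≤ (a : ℝ) ^ a * ((n : ℝ) ^ a) ^ 2 := by
      rw [← hS]; convert hc
    have hS0 : 0 ≤ S := hS ▸ Finset.sum_nonneg (fun _ _ => Finset.sum_nonneg (fun _ _ => by
      split_ifs <;> norm_num))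
    calc _ ≤ ((n : ℝ) ^ (vset e (insert k T)).card * p ^ (T.card + 1)) *
          (p ^ (T.card + 2 * (k.val - T.card) + 1) * S) :=
          mul_le_mul_of_nonneg_right hl (by positivity)
      _ = (S * (n : ℝ) ^ (vset e (insert k T)).card) *
            (p ^ (T.card + 1) * p ^ (T.card + 2 * (k.val - T.card) + 1)) := by ring
      _ = (S * (n : ℝ) ^ (vset e (insert k T)).card) * (p ^ (k.val + 1)) ^ 2 := by
          rw [← pow_add, ← pow_mul]; congr 2; omega
      _ ≤ ((a : ℝ) ^ a * ((n : ℝ) ^ a) ^ 2) * (p ^ (k.val + 1)) ^ 2 :=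
          mul_le_mul_of_nonneg_right hc' (by positivity)
      _ = _ := by ring
  refine (Finset.sum_le_sum hterm).trans ?_
  rw [Finset.sum_const, Finset.card_powerset, hQc, nsmul_eq_mul, mul_assoc]
  apply mul_le_mul_of_nonneg_right _ (by positivity)
  push_cast
  exact pow_le_pow_right₀ (by norm_num) k.2.le

section Game

noncomputable def eE {a n : ℕ} [Nonempty (EdgeT n)] (φ : Fin a ↪ Fin n) (e : Sym2 (Fin a)) :
    EdgeT n :=
  if h : (e.map φ).IsDiag then Classical.arbitrary _ else ⟨e.map φ, h⟩

lemma eE_val {a n : ℕ} [Nonempty (EdgeT n)] (φ : Fin a ↪ Fin n) (e : Sym2 (Fin a))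
    (he : ¬ e.IsDiag) : (eE φ e).1 = e.map φ := by
  have : ¬ (e.map φ).IsDiag := by
    rwa [Sym2.isDiag_map φ.injective]
  simp [eE, this]

lemma eE_eq_imp {a n : ℕ} [Nonempty (EdgeT n)] (φ ψ : Fin a ↪ Fin n) (e : Sym2 (Fin a))
    (he : ¬ e.IsDiag) (h : eE φ e = eE ψ e) : ∀ u ∈ e, ∃ u', ψ u = φ u' := by
  intro u hu
  have h1 : e.map φ = e.map ψ := by rw [← eE_val φ e he, ← eE_val ψ e he, h]
  have h2 : ψ u ∈ e.map φ := by
    rw [h1]; exact Sym2.mem_map.2 ⟨u, hu, rfl⟩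
  obtain ⟨u', _, h'⟩ := Sym2.mem_map.1 h2
  exact ⟨u', h'.symm⟩

variable {n r a K m : ℕ}

noncomputable def preF (f : Fin K → Fin m → EdgeT n) (j : ℕ) : List (EdgeT n) :=
  ((List.ofFn fun i => List.ofFn (f i)).take j).flatten

noncomputable def histF (π : PainterStrategy (Fin n) r) (f : Fin K → Fin m → EdgeT n) (j : ℕ) :
    EdgeHistory (Fin n) r :=
  runPainter π (((preF f (j + 1)).foldl stepD []).map Subtype.val)

noncomputable def uF [Nonempty (EdgeT n)] (π : PainterStrategy (Fin n) r)
    (f : Fin K → Fin m → EdgeT n) (φ : Fin a ↪ Fin n) (j : Fin K) :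
    Option (Sym2 (Fin a) × Fin r) → ℝ
  | none => 1
  | some x => if (x.1.map φ, x.2) ∈ histF π f j then cntY (f j) (eE φ x.1) else 0

noncomputable def WF [Nonempty (EdgeT n)] (π : PainterStrategy (Fin n) r)
    (f : Fin K → Fin m → EdgeT n) (h : EdgeHistory (Fin a) r) (φ : Fin a ↪ Fin n) : ℝ :=
  ∏ j : Fin K, uF π f φ j (h[j.val]?)

noncomputable def XF [Nonempty (EdgeT n)] (π : PainterStrategy (Fin n) r)
    (f : Fin K → Fin m → EdgeT n) (h : EdgeHistory (Fin a) r) : ℝ := ∑ φ, WF π f h φ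

noncomputable def YF [Nonempty (EdgeT n)] (π : PainterStrategy (Fin n) r)
    (f : Fin K → Fin m → EdgeT n) (h : EdgeHistory (Fin a) r) (k : Fin K) (e : Sym2 (Fin a)) : ℝ :=
  ∑ φ, WF π f h φ * cntY (f k) (eE φ e)

lemma preF_update (f : Fin K → Fin m → EdgeT n) (k : Fin K) (y) (j : ℕ) (hj : j ≤ k) :
    preF (Function.update f k y) j = preF f j := by
  unfold preF
  congr 1
  apply List.ext_getElem
  · simp
  · intro i h1 h2
    simp only [List.getElem_take, List.getElem_ofFn]
    rw [Function.update_of_ne]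
    intro h
    have : i < j := by simp at h1; exact h1.1
    have h3 : i = k.val := by rw [← h]
    omega

lemma histF_update (π : PainterStrategy (Fin n) r) (f : Fin K → Fin m → EdgeT n) (k : Fin K) (y)
    (j : ℕ) (hj : j < k) : histF π (Function.update f k y) j = histF π f j := by
  unfold histF
  rw [preF_update _ _ _ _ (by omega)]

lemma uF_nonneg [Nonempty (EdgeT n)] (π : PainterStrategy (Fin n) r)
    (f : Fin K → Fin m → EdgeT n) (φ : Fin a ↪ Fin n) (j : Fin K) (o) : 0 ≤ uF π f φ j o := by
  rcases o with _ | x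
  · simp [uF]
  · simp only [uF]; split_ifs
    · exact cntY_nonneg _ _
    · exact le_rfl

lemma WF_nonneg [Nonempty (EdgeT n)] (π : PainterStrategy (Fin n) r)
    (f : Fin K → Fin m → EdgeT n) (h : EdgeHistory (Fin a) r) (φ : Fin a ↪ Fin n) :
    0 ≤ WF π f h φ := Finset.prod_nonneg (fun _ _ => uF_nonneg _ _ _ _ _)

lemma WF_update [Nonempty (EdgeT n)] (π : PainterStrategy (Fin n) r)
    (f : Fin K → Fin m → EdgeT n) (h : EdgeHistory (Fin a) r) (φ : Fin a ↪ Fin n)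
    (k : Fin K) (hk : h.length = k) (y) :
    WF π (Function.update f k y) h φ = WF π f h φ := by
  unfold WF
  apply Finset.prod_congr rfl
  intro j _
  by_cases hj : j.val < h.length
  · rw [List.getElem?_eq_getElem hj]
    simp only [uF]
    rw [histF_update _ _ _ _ _ (by omega), Function.update_of_ne]
    intro h'; subst h'; omega
  · rw [List.getElem?_eq_none (by omega)]
    simp [uF]

lemma WF_le [Nonempty (EdgeT n)] (π : PainterStrategy (Fin n) r)
    (f : Fin K → Fin m → EdgeT n) (h : EdgeHistory (Fin a) r) (e : Sym2 (Fin a))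
    (φ : Fin a ↪ Fin n) (k : Fin K) (hk : h.length = k) :
    WF π f h φ ≤ ∏ j : Fin K, if j < k then
      cntY (f j) (eE φ ((h.map Prod.fst ++ [e]).getD j e)) else 1 := by
  unfold WF
  apply Finset.prod_le_prod (fun _ _ => uF_nonneg _ _ _ _ _)
  intro j _
  by_cases hj : j.val < h.length
  · have hjk : j < k := by rw [Fin.lt_def]; omega
    rw [List.getElem?_eq_getElem hj, if_pos hjk]
    have h1 : (h.map Prod.fst ++ [e]).getD j e = (h[j.val]).1 := by
      rw [List.getD_eq_getElem _ _ (by simp; omega), List.getElem_append_left (by simpa using hj)]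
      simp
    rw [h1]
    simp only [uF]
    split_ifs
    · exact le_rfl
    · exact cntY_nonneg _ _
  · have hjk : ¬ j < k := by rw [Fin.lt_def]; omega
    rw [List.getElem?_eq_none (by omega), if_neg hjk]
    simp [uF]

lemma WF_append [Nonempty (EdgeT n)] (π : PainterStrategy (Fin n) r)
    (f : Fin K → Fin m → EdgeT n) (h : EdgeHistory (Fin a) r) (x : Sym2 (Fin a) × Fin r)
    (φ : Fin a ↪ Fin n) (k : Fin K) (hk : h.length = k) :
    WF π f (h ++ [x]) φ = WF π f h φ * uF π f φ k (some x) := by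
  unfold WF
  rw [← Finset.mul_prod_erase _ _ (Finset.mem_univ k),
    ← Finset.mul_prod_erase _ (fun j : Fin K => uF π f φ j (h[j.val]?)) (Finset.mem_univ k)]
  have h1 : (h ++ [x])[k.val]? = some x := by rw [← hk]; simp
  have h2 : h[k.val]? = none := by rw [← hk]; simp
  rw [h1, h2]
  have h3 : ∏ j ∈ Finset.univ.erase k, uF π f φ j ((h ++ [x])[j.val]?) =
      ∏ j ∈ Finset.univ.erase k, uF π f φ j (h[j.val]?) := by
    apply Finset.prod_congr rfl
    intro j hj
    have hne : j.val ≠ k.val := fun h' => (Finset.mem_erase.1 hj).1 (Fin.ext h')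
    congr 1
    rcases lt_or_gt_of_ne hne with h' | h'
    · rw [List.getElem?_append_left (by omega)]
    · rw [List.getElem?_eq_none (by simp; omega), List.getElem?_eq_none (by omega)]
  rw [h3]
  simp only [uF]
  ring

lemma mem_preF (f : Fin K → Fin m → EdgeT n) (k : Fin K) (i : Fin m) :
    f k i ∈ preF f (k.val + 1) := by
  unfold preF
  rw [List.mem_flatten]
  refine ⟨List.ofFn (f k), ?_, by simp⟩
  rw [List.mem_take_iff_getElem]
  exact ⟨k.val, by simp, by simp⟩

lemma sum_XF_ge [Nonempty (EdgeT n)] (π : PainterStrategy (Fin n) r)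
    (f : Fin K → Fin m → EdgeT n) (h : EdgeHistory (Fin a) r) (e : Sym2 (Fin a))
    (he : ¬ e.IsDiag) (k : Fin K) (hk : h.length = k) :
    YF π f h k e ≤ ∑ c, XF π f (h ++ [(e, c)]) := by
  unfold YF XF
  rw [Finset.sum_comm]
  apply Finset.sum_le_sum
  intro φ _
  simp only [WF_append π f h _ φ k hk, ← Finset.mul_sum]
  apply mul_le_mul_of_nonneg_left _ (WF_nonneg _ _ _ _)
  by_cases h0 : ∃ i, f k i = eE φ e
  · obtain ⟨i, hi⟩ := h0
    obtain ⟨c, hc⟩ := exists_color π (((preF f (k.val + 1)).foldl stepD []).map Subtype.val)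
      (e.map φ) (by
        rw [List.mem_map]
        refine ⟨f k i, ?_, ?_⟩
        · rw [mem_foldl_stepD]; right; exact mem_preF f k i
        · rw [hi, eE_val φ e he])
    have h1 : uF π f φ k (some (e, c)) = cntY (f k) (eE φ e) := by
      simp only [uF]; exact if_pos hc
    rw [← h1]
    exact Finset.single_le_sum (f := fun c => uF π f φ k (some (e, c)))
      (fun c _ => uF_nonneg _ _ _ _ _) (Finset.mem_univ c)
  · push Not at h0
    have : cntY (f k) (eE φ e) = 0 := by simp [cntY, h0]
    rw [this]
    exact Finset.sum_nonneg (fun c _ => uF_nonneg _ _ _ _ _)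

def Adm (K : ℕ) (d : ℝ) (h : EdgeHistory (Fin a) r) (e : Sym2 (Fin a)) : Prop :=
  h.length < K ∧ ValidEdgeSeq (h.map Prod.fst ++ [e]) ∧
    DensityLE (boardOf (h.map Prod.fst ++ [e])) d

lemma density_T {d : ℝ} (s : List (Sym2 (Fin a))) (hs : ValidEdgeSeq s)
    (hd : DensityLE (boardOf s) d) (e : Fin K → Sym2 (Fin a)) (T : Finset (Fin K))
    (hT : T.Nonempty) (he : ∀ j ∈ T, ∃ h : j.val < s.length, e j = s[j.val]) :
    (vset e T).Nonempty ∧ (T.card : ℝ) ≤ d * (vset e T).card := by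
  have hne : (vset e T).Nonempty := by
    obtain ⟨j, hj⟩ := hT
    refine ⟨(e j).out.1, ?_⟩
    simp only [vset, Finset.mem_filter, Finset.mem_univ, true_and]
    exact ⟨j, hj, Sym2.out_fst_mem _⟩
  refine ⟨hne, le_trans ?_ (hd _ hne)⟩
  norm_cast
  unfold edgesWithin
  have hinj : Set.InjOn e (T : Set (Fin K)) := by
    intro i hi j hj hij
    obtain ⟨h1, h1'⟩ := he i hi
    obtain ⟨h2, h2'⟩ := he j hj
    rw [h1', h2'] at hij
    exact Fin.ext ((List.Nodup.getElem_inj_iff hs.1).1 hij)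
  rw [← Set.ncard_coe_finset T, ← Set.ncard_image_of_injOn hinj]
  apply Set.ncard_le_ncard _ (Set.toFinite _)
  rintro _ ⟨j, hj, rfl⟩
  obtain ⟨h1, h1'⟩ := he j hj
  have hm : e j ∈ s := by rw [h1']; exact List.getElem_mem _
  constructor
  · unfold boardOf
    rw [edgeSet_fromEdgeSet]
    exact ⟨hm, hs.2 _ hm⟩
  · intro v hv
    simp only [vset, Finset.coe_filter, Finset.mem_univ, true_and]
    exact ⟨j, hj, hv⟩

lemma step_moment [Nonempty (EdgeT n)] (π : PainterStrategy (Fin n) r) {p d : ℝ}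
    (hp : p = m / Fintype.card (EdgeT n)) (hp0 : 0 < p) (hp1 : p ≤ 1) (hΛ : 1 ≤ n * p ^ d)
    (h : EdgeHistory (Fin a) r) (e : Sym2 (Fin a)) (k : Fin K) (hk : h.length = k)
    (hA : Adm K d h e) :
    (n * p ^ d) * Finset.univ.expect (fun f : Fin K → Fin m → EdgeT n =>
      (YF π f h k e - p * XF π f h) ^ 2) ≤
    2 ^ K * (a : ℝ) ^ a * ((n : ℝ) ^ a * p ^ (k.val + 1)) ^ 2 := by
  obtain ⟨hlen, hval, hden⟩ := hA
  set s := h.map Prod.fst ++ [e] with hs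
  have hsl : s.length = k.val + 1 := by simp [hs, hk]
  have hget : ∀ j : Fin K, j ≤ k → ∃ h : j.val < s.length, s.getD j e = s[j.val] := by
    intro j hj
    have : j.val < s.length := by rw [hsl]; have := Fin.le_def.1 hj; omega
    exact ⟨this, List.getD_eq_getElem _ _ this⟩
  have hk' : s.getD k e = e := by
    rw [hs, ← hk, List.getD_append_right _ _ _ _ (by simp)]; simp
  refine le_trans ?_ (moment_bound k (fun j => s.getD j e) (fun j φ => eE φ (s.getD j e))
    hp0 hp1 hΛ ?_ ?_)
  · apply mul_le_mul_of_nonneg_left _ (by linarith)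
    have := second_moment (m := m) k (fun j (φ : Fin a ↪ Fin n) => eE φ (s.getD j e))
      (fun f φ => WF π f h φ)
      (fun f φ => WF_nonneg _ _ _ _) (fun f φ => WF_le π f h e φ k hk)
      (fun f φ y => WF_update π f h φ k hk y) p hp
    simp only [hk'] at this ⊢
    exact this
  · intro j hj φ ψ heq
    obtain ⟨h1, h2⟩ := hget j hj
    refine eE_eq_imp φ ψ _ ?_ heq
    rw [h2]
    exact hval.2 _ (List.getElem_mem _)
  · intro T hT hTk
    exact density_T s hval hden _ T hT (fun j hj => hget j (hTk j hj))

end Game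

section Final

variable {n r a K m : ℕ}

lemma XF_pos_good [Nonempty (EdgeT n)] {α : Type} (F : SimpleGraph α)
    (π : PainterStrategy (Fin n) r)
    (f : Fin K → Fin m → EdgeT n) (h : EdgeHistory (Fin a) r) (hl : h.length ≤ K)
    (hpos : 0 < XF π f h) (hm : HasMonoCopy F h) :
    GoodL F π ((preF f K).foldl stepD []) := by
  unfold XF at hpos
  obtain ⟨φ, -, hφ⟩ := Finset.exists_ne_zero_of_sum_ne_zero hpos.ne'
  unfold WF at hφ
  rw [Finset.prod_ne_zero_iff] at hφ
  have key : ∀ x ∈ h, (x.1.map φ, x.2) ∈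
      runPainter π (((preF f K).foldl stepD []).map Subtype.val) := by
    intro x hx
    obtain ⟨j, hj, rfl⟩ := List.mem_iff_getElem.1 hx
    have h1 := hφ ⟨j, by omega⟩ (Finset.mem_univ _)
    rw [List.getElem?_eq_getElem hj] at h1
    simp only [uF] at h1
    have h2 : (h[j].1.map φ, h[j].2) ∈ histF π f j := by
      by_contra h3
      rw [if_neg h3] at h1
      exact h1 rfl
    refine (runPainter_prefix π ?_).subset h2
    apply List.IsPrefix.map
    have h3 : preF f (j + 1) <+: preF f K := by
      unfold preF
      have : (List.ofFn fun i => List.ofFn (f i)).take (j + 1) <+: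
        (List.ofFn fun i => List.ofFn (f i)).take K := List.take_prefix_take_left (by omega)
      obtain ⟨t, ht⟩ := this
      rw [← ht, List.flatten_append]
      exact List.prefix_append _ _
    obtain ⟨t, ht⟩ := h3
    rw [← ht, List.foldl_append]
    exact prefix_foldl_stepD _ _
  obtain ⟨c, g, hg⟩ := hm
  refine ⟨c, g.trans φ, fun u v huv => ?_⟩
  have h1 := hg u v huv
  simp only [colorGraph, fromEdgeSet_adj, Set.mem_ofPred_eq] at h1 ⊢
  have h2 := key _ h1.1
  exact ⟨by simpa using h2, fun h' => h1.2 (φ.injective h')⟩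

lemma pointwise [Nonempty (EdgeT n)] {α : Type} (F : SimpleGraph α)
    (π : PainterStrategy (Fin n) r) (hr : 0 < r)
    (f : Fin K → Fin m → EdgeT n) {d p c0 : ℝ} (hp : 0 < p) (hn : 0 < n) (hc0 : 0 < c0)
    (hK : Fintype.card (Sym2 (Fin a)) ≤ K)
    (hB : ∀ π : PainterStrategy (Fin a) r, ∃ l : List (Sym2 (Fin a)),
      ValidEdgeSeq l ∧ (∀ i : ℕ, DensityLE (boardOf (l.take i)) d) ∧
      HasMonoCopy F (runPainter π l))
    (h0 : c0 * (n : ℝ) ^ a ≤ (Fintype.card (Fin a ↪ Fin n) : ℝ))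
    (hst : ∀ (h : EdgeHistory (Fin a) r) (e : Sym2 (Fin a)) (k : Fin K), h.length = k →
      Adm K d h e → |YF π f h k e - p * XF π f h| ≤
        (c0 / (2 * r) ^ K / 2) * ((n : ℝ) ^ a * p ^ (k.val + 1))) :
    GoodL F π ((preF f K).foldl stepD []) := by
  have hne : Nonempty (Fin r) := ⟨⟨0, hr⟩⟩
  have hch : ∀ (h : EdgeHistory (Fin a) r) (e : Sym2 (Fin a)), ∃ c : Fin r,
      ∀ c', XF π f (h ++ [(e, c')]) ≤ XF π f (h ++ [(e, c)]) :=
    fun h e => Finite.exists_max (fun c => XF π f (h ++ [(e, c)]))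
  choose π' hπ' using hch
  obtain ⟨l, hval, hden, hmono⟩ := hB π'
  have hlK : l.length ≤ K := (List.Nodup.length_le_card hval.1).trans hK
  have hr1 : (1 : ℝ) ≤ r := by exact_mod_cast hr
  have main : ∀ i ≤ l.length, c0 / (2 * r) ^ i * ((n : ℝ) ^ a * p ^ i) ≤
      XF π f (runPainter π' (l.take i)) := by
    intro i
    induction i with
    | zero =>
      intro _
      have : XF π f (runPainter π' (l.take 0)) = (Fintype.card (Fin a ↪ Fin n) : ℝ) := by
        simp [XF, WF, runPainter, runPainterAux, uF]
      rw [this]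
      simpa using h0
    | succ i ih =>
      intro hi
      have ih := ih (by omega)
      have htk : l.take (i + 1) = l.take i ++ [l[i]] := by
        rw [List.take_append_getElem (by omega)]
      set h := runPainter π' (l.take i) with hh
      have hlen : h.length = i := by rw [hh, runPainter_length]; simp; omega
      have hrun : runPainter π' (l.take (i + 1)) = h ++ [(l[i], π' h l[i])] := by
        rw [htk, runPainter_concat]
      have hfst : h.map Prod.fst ++ [l[i]] = l.take (i + 1) := by
        rw [hh, runPainter_map_fst, htk]
      have hA : Adm K d h l[i] := by
        refine ⟨by omega, ?_, ?_⟩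
        · rw [hfst]
          exact ⟨hval.1.sublist (List.take_sublist _ _),
            fun e he => hval.2 e (List.mem_of_mem_take he)⟩
        · rw [hfst]; exact hden _
      let k : Fin K := ⟨i, by omega⟩
      have h1 := hst h l[i] k hlen hA
      have h2 := sum_XF_ge π f h l[i] (hval.2 _ (List.getElem_mem _)) k hlen
      have h3 : ∑ c, XF π f (h ++ [(l[i], c)]) ≤ r * XF π f (h ++ [(l[i], π' h l[i])]) := by
        calc _ ≤ ∑ c : Fin r, XF π f (h ++ [(l[i], π' h l[i])]) :=
              Finset.sum_le_sum (fun c _ => hπ' h l[i] c)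
          _ = _ := by simp
      rw [hrun]
      set Z := XF π f (h ++ [(l[i], π' h l[i])])
      have h4 := (abs_le.1 h1).1
      have h5 : c0 / (2 * r) ^ K ≤ c0 / (2 * r) ^ i := by
        apply div_le_div_of_nonneg_left hc0.le (by positivity)
        exact pow_le_pow_right₀ (by linarith) (by omega)
      have h6 : (k.val) = i := rfl
      rw [h6] at h4
      have hμ : 0 < (n : ℝ) ^ a * p ^ (i + 1) := by positivity
      have h7 : p * (c0 / (2 * r) ^ i * ((n : ℝ) ^ a * p ^ i)) ≤ p * XF π f h :=
        mul_le_mul_of_nonneg_left ih hp.le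
      have h8 : p * (c0 / (2 * r) ^ i * ((n : ℝ) ^ a * p ^ i)) =
        c0 / (2 * r) ^ i * ((n : ℝ) ^ a * p ^ (i + 1)) := by ring
      have h9 := mul_le_mul_of_nonneg_right h5 hμ.le
      have h10 : c0 / (2 * r) ^ i * ((n : ℝ) ^ a * p ^ (i + 1)) / 2 ≤ r * Z := by
        linarith
      have h11 : c0 / (2 * r) ^ (i + 1) * ((n : ℝ) ^ a * p ^ (i + 1)) =
          (c0 / (2 * r) ^ i * ((n : ℝ) ^ a * p ^ (i + 1)) / 2) / r := by
        rw [pow_succ]; field_simp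
      rw [h11, div_le_iff₀ (by linarith)]
      linarith
  have hfin := main l.length le_rfl
  rw [List.take_length] at hfin
  refine XF_pos_good F π f _ (by rw [runPainter_length]; exact hlK) (lt_of_lt_of_le ?_ hfin) hmono
  positivity

lemma avP_blocks (Good : List (EdgeT n) → Prop) :
    avP Good (K * m) [] = Finset.univ.expect (fun f : Fin K → Fin m → EdgeT n =>
      if Good ((preF f K).foldl stepD []) then (1 : ℝ) else 0) := by
  rw [avP_eq]
  refine Fintype.expect_equiv (((Equiv.arrowCongr finProdFinEquiv (Equiv.refl _)).symm.trans
    (Equiv.curry _ _ _))) _ _ ?_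
  intro s
  have : List.ofFn s = preF (((Equiv.arrowCongr finProdFinEquiv (Equiv.refl _)).symm.trans
    (Equiv.curry _ _ _)) s) K := by
    unfold preF
    rw [List.take_of_length_le (by simp), List.ofFn_mul]
    congr 2
    ext i : 1
    congr 1
    ext j : 1
    simp only [Equiv.trans_apply, Equiv.curry_apply, Function.curry_apply]
    simp [Equiv.arrowCongr]
    congr 1
    ext
    simp [finProdFinEquiv]
    ring
  rw [this]

noncomputable def admSet (a r K : ℕ) (d : ℝ) : Finset (EdgeHistory (Fin a) r × Sym2 (Fin a)) :=
  (((List.finite_length_lt (Sym2 (Fin a) × Fin r) K).prod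
    (Set.finite_univ (α := Sym2 (Fin a)))).toFinset).filter (fun x => Adm K d x.1 x.2)

lemma mem_admSet {d : ℝ} {h : EdgeHistory (Fin a) r} {e : Sym2 (Fin a)} :
    (h, e) ∈ admSet a r K d ↔ Adm K d h e := by
  simp only [admSet, Finset.mem_filter, Set.Finite.mem_toFinset, Set.mem_prod, Set.mem_univ,
    and_true]
  constructor
  · exact fun h => h.2
  · exact fun h => ⟨h.1, h⟩

lemma main_bound [Nonempty (EdgeT n)] {α : Type} (F : SimpleGraph α)
    (π : PainterStrategy (Fin n) r) (hr : 0 < r)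
    {d p c0 : ℝ} (hp : p = m / Fintype.card (EdgeT n)) (hp0 : 0 < p) (hp1 : p ≤ 1)
    (hΛ : 1 ≤ n * p ^ d) (hn : 0 < n) (hc0 : 0 < c0)
    (hK : Fintype.card (Sym2 (Fin a)) ≤ K)
    (hB : ∀ π : PainterStrategy (Fin a) r, ∃ l : List (Sym2 (Fin a)),
      ValidEdgeSeq l ∧ (∀ i : ℕ, DensityLE (boardOf (l.take i)) d) ∧
      HasMonoCopy F (runPainter π l))
    (h0 : c0 * (n : ℝ) ^ a ≤ (Fintype.card (Fin a ↪ Fin n) : ℝ)) :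
    1 - ((admSet a r K d).card * (2 ^ K * (a : ℝ) ^ a / (c0 / (2 * r) ^ K / 2) ^ 2)) / (n * p ^ d)
      ≤ avP (GoodL F π) (K * m) [] := by
  have hr1 : (1 : ℝ) ≤ r := by exact_mod_cast hr
  set δ := c0 / (2 * (r : ℝ)) ^ K / 2 with hδ
  have hδ0 : 0 < δ := by positivity
  let term : (Fin K → Fin m → EdgeT n) → EdgeHistory (Fin a) r × Sym2 (Fin a) → ℝ := fun f x =>
    if hk : x.1.length < K then
      ((YF π f x.1 ⟨x.1.length, hk⟩ x.2 - p * XF π f x.1)) ^ 2 /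
        (δ * ((n : ℝ) ^ a * p ^ (x.1.length + 1))) ^ 2 else 0
  have hterm0 : ∀ f x, 0 ≤ term f x := by
    intro f x; simp only [term]; split_ifs <;> positivity
  have hpt : ∀ f : Fin K → Fin m → EdgeT n,
      1 - ∑ x ∈ admSet a r K d, term f x ≤
        if GoodL F π ((preF f K).foldl stepD []) then (1 : ℝ) else 0 := by
    intro f
    have hs0 : 0 ≤ ∑ x ∈ admSet a r K d, term f x := Finset.sum_nonneg (fun x _ => hterm0 f x)
    split_ifs with hg
    · linarith
    · by_contra hlt
      push Not at hlt
      apply hg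
      refine pointwise F π hr f hp0 hn hc0 hK hB h0 ?_
      intro h e k hk hA
      have h1 : term f (h, e) ≤ ∑ x ∈ admSet a r K d, term f x :=
        Finset.single_le_sum (fun x _ => hterm0 f x) (mem_admSet.2 hA)
      have h2 : term f (h, e) < 1 := by linarith
      have hk' : (⟨h.length, hA.1⟩ : Fin K) = k := Fin.ext hk
      simp only [term] at h2
      rw [dif_pos hA.1, hk', div_lt_one (by positivity), hk] at h2
      have := abs_lt_of_sq_lt_sq h2 (by positivity)
      exact this.le
  rw [avP_blocks]
  refine le_trans ?_ (Finset.expect_le_expect (fun f _ => hpt f))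
  have hm : Nonempty (Fin K → Fin m → EdgeT n) := inferInstance
  rw [Finset.expect_sub_distrib, Fintype.expect_const, Finset.expect_sum_comm]
  apply sub_le_sub_left
  have hx : ∀ x ∈ admSet a r K d, Finset.univ.expect (fun f => term f x) ≤
      (2 ^ K * (a : ℝ) ^ a / δ ^ 2) / (n * p ^ d) := by
    rintro ⟨h, e⟩ hx
    have hA := mem_admSet.1 hx
    simp only [term]
    simp only [dif_pos hA.1]
    have := step_moment (K := K) (m := m) π hp hp0 hp1 hΛ h e ⟨h.length, hA.1⟩ rfl hA
    rw [← Finset.expect_div]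
    have hΛ0 : 0 < n * p ^ d := by linarith
    have hμ : 0 < (n : ℝ) ^ a * p ^ (h.length + 1) := by positivity
    rw [div_le_div_iff₀ (by positivity) hΛ0, mul_pow]
    calc _ ≤ 2 ^ K * (a : ℝ) ^ a * ((n : ℝ) ^ a * p ^ (h.length + 1)) ^ 2 := by
          rw [mul_comm]; exact this
      _ = _ := by field_simp
  refine (Finset.sum_le_sum hx).trans (le_of_eq ?_)
  rw [Finset.sum_const, nsmul_eq_mul]
  ring

lemma card_emb_ge (a n : ℕ) (h : 2 * a ≤ n) :
    (1 / 2 : ℝ) ^ a * (n : ℝ) ^ a ≤ (Fintype.card (Fin a ↪ Fin n) : ℝ) := by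
  rw [Fintype.card_embedding_eq]
  simp only [Fintype.card_fin]
  have h1 := Nat.pow_sub_le_descFactorial n a
  have h2 : ((n + 1 - a : ℕ) : ℝ) ^ a ≤ (n.descFactorial a : ℝ) := by exact_mod_cast h1
  refine le_trans ?_ h2
  rw [← mul_pow]
  gcongr
  rw [Nat.cast_sub (by omega)]
  have : (2 * a : ℝ) ≤ n := by exact_mod_cast h
  push_cast
  linarith

lemma d_ge_half {α : Type} (F : SimpleGraph α) (hF : F.edgeSet.Nonempty) (hr : 0 < r) {d : ℝ}
    (hB : BuilderWinsDensity F r d) : 1 / 2 ≤ d := by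
  obtain ⟨a, ha⟩ := hB
  obtain ⟨l, hval, hden, c, g, hg⟩ := ha (fun _ _ => ⟨0, hr⟩)
  obtain ⟨e, he⟩ := hF
  induction e using Sym2.ind with
  | _ u v =>
    have h1 := hg u v he
    simp only [colorGraph, fromEdgeSet_adj, Set.mem_ofPred_eq] at h1
    obtain ⟨hm, hne⟩ := h1
    have hml : s(g u, g v) ∈ l := by
      have := List.mem_map_of_mem (f := Prod.fst) hm
      rwa [runPainter_map_fst] at this
    have h2 := hden l.length {g u, g v} (by simp)
    rw [List.take_length, Finset.card_pair hne] at h2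
    have h3 : 1 ≤ edgesWithin (boardOf l) (({g u, g v} : Finset (Fin a)) : Set (Fin a)) := by
      unfold edgesWithin
      rw [Nat.one_le_iff_ne_zero, ← Nat.pos_iff_ne_zero, Set.ncard_pos (Set.toFinite _)]
      refine ⟨s(g u, g v), ?_, ?_⟩
      · rw [boardOf, edgeSet_fromEdgeSet]
        exact ⟨hml, hval.2 _ hml⟩
      · intro w hw
        simpa using hw
    have h4 : (1 : ℝ) ≤ (edgesWithin (boardOf l) (({g u, g v} : Finset (Fin a)) : Set (Fin a)) : ℝ) := by
      exact_mod_cast h3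
    push_cast at h2 h4
    linarith

lemma lam_tendsto {d : ℝ} (hd : 1 / 2 ≤ d) (K : ℕ) (hK : 0 < K) (N : ℕ → ℕ)
    (hN : (fun n : ℕ => (n : ℝ) ^ ((2 : ℝ) - 1 / d)) =o[atTop] (fun n : ℕ => (N n : ℝ))) :
    (∀ᶠ n in atTop, K ≤ N n) ∧
    Tendsto (fun n : ℕ => (n : ℝ) * (((N n / K : ℕ) : ℝ) / (n.choose 2 : ℝ)) ^ d) atTop atTop := by
  have hd0 : 0 < d := by linarith
  have hK' : (0 : ℝ) < K := by exact_mod_cast hK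
  have hexp : 0 ≤ (2 : ℝ) - 1 / d := by
    rw [sub_nonneg, div_le_iff₀ hd0]; linarith
  have hKN : ∀ᶠ n in atTop, K ≤ N n := by
    have := hN.def (c := 1 / K) (by positivity)
    filter_upwards [this, eventually_ge_atTop 1] with n h1 hn
    have h2 : (1 : ℝ) ≤ (n : ℝ) ^ ((2 : ℝ) - 1 / d) :=
      Real.one_le_rpow (by exact_mod_cast hn) hexp
    rw [Real.norm_of_nonneg (by positivity), Real.norm_of_nonneg (by positivity)] at h1
    have h3 : (1 : ℝ) ≤ 1 / K * N n := h2.trans h1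
    rw [one_div, ← div_eq_inv_mul, le_div_iff₀ hK', one_mul] at h3
    exact_mod_cast h3
  refine ⟨hKN, ?_⟩
  rw [tendsto_atTop]
  intro b0
  set b := max b0 1 with hb
  have hb0 : 0 < b := lt_of_lt_of_le one_pos (le_max_right _ _)
  have hbd : 0 < b ^ (1 / d) := Real.rpow_pos_of_pos hb0 _
  have := hN.def (c := 1 / (K * b ^ (1 / d))) (by positivity)
  filter_upwards [this, eventually_ge_atTop 2, hKN] with n h1 hn hKn
  refine (le_max_left b0 1).trans ?_
  rw [← hb]
  have hn0 : (0 : ℝ) < n := by exact_mod_cast (by omega : 0 < n)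
  rw [Real.norm_of_nonneg (by positivity), Real.norm_of_nonneg (by positivity)] at h1
  have hm : (N n : ℝ) ≤ 2 * K * ((N n / K : ℕ) : ℝ) := by
    have e1 : N n < K * (N n / K) + K := by
      have := Nat.div_add_mod (N n) K
      have := Nat.mod_lt (N n) hK
      omega
    have e2 : 1 ≤ N n / K := (Nat.one_le_div_iff hK).2 hKn
    have e3 : N n ≤ 2 * K * (N n / K) := by nlinarith
    exact_mod_cast e3
  have hM0 : (0 : ℝ) < (n.choose 2 : ℝ) := by exact_mod_cast Nat.choose_pos hn
  have hM : (n.choose 2 : ℝ) ≤ (n : ℝ) ^ 2 / 2 := by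
    rw [Nat.cast_choose_two]
    nlinarith
  have hpow : (n : ℝ) ^ ((2 : ℝ) - 1 / d) = (n : ℝ) ^ 2 * (n : ℝ) ^ (-(1 / d)) := by
    rw [sub_eq_add_neg, Real.rpow_add hn0]; norm_cast
  have hp : b ^ (1 / d) * (n : ℝ) ^ (-(1 / d)) ≤ ((N n / K : ℕ) : ℝ) / (n.choose 2 : ℝ) := by
    rw [le_div_iff₀ hM0]
    rw [hpow, one_div_mul_eq_div, le_div_iff₀ (by positivity)] at h1
    have hq : 0 < (n : ℝ) ^ (-(1 / d)) := Real.rpow_pos_of_pos hn0 _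
    calc _ ≤ b ^ (1 / d) * (n : ℝ) ^ (-(1 / d)) * ((n : ℝ) ^ 2 / 2) := by gcongr
      _ = ((n : ℝ) ^ 2 * (n : ℝ) ^ (-(1 / d)) * (K * b ^ (1 / d))) / (2 * K) := by
          field_simp
      _ ≤ (N n : ℝ) / (2 * K) := by gcongr
      _ ≤ _ := by rw [div_le_iff₀ (by positivity)]; linarith
  calc b = n * (b ^ (1 / d) * (n : ℝ) ^ (-(1 / d))) ^ d := by
        rw [Real.mul_rpow hbd.le (by positivity), ← Real.rpow_mul hb0.le, ← Real.rpow_mul hn0.le]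
        rw [one_div_mul_cancel hd0.ne', Real.rpow_one, neg_mul, one_div_mul_cancel hd0.ne',
          Real.rpow_neg_one]
        field_simp
    _ ≤ _ := by gcongr

end Final

/-- Theorem 4 of the paper. If Builder has a winning strategy in the
deterministic `F`-avoidance game with `r ≥ 2` colors and density restriction `d > 0`, then
for every `N : ℕ → ℕ` with `n^(2-1/d) = o(N(n))` and `N(n) ≤ n(n-1)/2`, and every sequence
of online Painter strategies, a.a.s. the board after `N(n)` steps contains a monochromatic
copy of `F`. -/
theorem statement0 {α : Type} [Fintype α] (F : SimpleGraph α) (hF : F.edgeSet.Nonempty)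
    (r : ℕ) (hr : 2 ≤ r) (d : ℝ) (hd : 0 < d)
    (hBuilder : BuilderWinsDensity F r d)
    (N : ℕ → ℕ)
    (hN : (fun n : ℕ => (n : ℝ) ^ ((2 : ℝ) - 1 / d)) =o[atTop] (fun n : ℕ => (N n : ℝ)))
    (hNle : ∀ n : ℕ, N n ≤ n * (n - 1) / 2)
    (π : (n : ℕ) → PainterStrategy (Fin n) r) :
    Tendsto (fun n : ℕ => onlineProb n (N n) (OnlineMonoCopy F (π n)))
      atTop (nhds 1) := by

  have hr0 : 0 < r := by omega
  have hd2 := d_ge_half F hF hr0 hBuilder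
  obtain ⟨a, hB⟩ := hBuilder
  set K := Fintype.card (Sym2 (Fin a)) + 1 with hK
  obtain ⟨hKN, hΛ⟩ := lam_tendsto hd2 K (by omega) N hN
  set C : ℝ := (admSet a r K d).card *
    (2 ^ K * (a : ℝ) ^ a / ((1 / 2 : ℝ) ^ a / (2 * r) ^ K / 2) ^ 2) with hC
  have hlim : Tendsto (fun n : ℕ => 1 - C / ((n : ℝ) *
      (((N n / K : ℕ) : ℝ) / (n.choose 2 : ℝ)) ^ d)) atTop (nhds 1) := by
    have := (hΛ.const_div_atTop C).const_sub 1
    simpa using this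
  refine tendsto_of_tendsto_of_tendsto_of_le_of_le' hlim tendsto_const_nhds ?_
    (Eventually.of_forall (fun n => onlineProb_le_one _ _ _))
  filter_upwards [hKN, hΛ.eventually_ge_atTop 1, eventually_ge_atTop 2,
    eventually_ge_atTop (2 * a)] with n h1 h2 h3 h4
  have : Nonempty (EdgeT n) := by
    rw [← Fintype.card_pos_iff, card_EdgeT]
    exact Nat.choose_pos h3
  have hM0 : (0 : ℝ) < (n.choose 2 : ℝ) := by exact_mod_cast Nat.choose_pos h3
  have hNM : N n ≤ n.choose 2 := by rw [Nat.choose_two_right]; exact hNle n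
  have hm1 : 1 ≤ N n / K := (Nat.one_le_div_iff (by omega)).2 h1
  have hm2 : N n / K ≤ n.choose 2 := (Nat.div_le_self _ _).trans hNM
  have hm1' : (1 : ℝ) ≤ ((N n / K : ℕ) : ℝ) := by exact_mod_cast hm1
  refine le_trans ?_ (onlineProb_ge F (π n) (N n) (K * (N n / K)) hNM (Nat.mul_div_le _ _) h3)
  exact main_bound F (π n) hr0 (m := N n / K) (by rw [card_EdgeT]) (by positivity)
    (by rw [div_le_one hM0]; exact_mod_cast hm2) h2 (by omega) (by positivity)
    (by omega) hB (card_emb_ge a n h4)
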